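/- If T is typable, Tσ ∈ 𝒟, and T → T', then ⟦T⟧σ = ⟦T'⟧σ (the interpretation of types is invariant by reduction of the type). -/

import Mathlib

set_option maxHeartbeats 1000000

/-! # Terms of λΠ/R (de Bruijn representation) -/

inductive Trm (F : Type) : Type
  | type : Trm F
  | kind : Trm F
  | var : ℕ → Trm F
  | sym : F → Trm F
  | pi : Trm F → Trm F → Trm F
  | app : Trm F → Trm F → Trm F
  | lam : Trm F → Trm F → Trm F

namespace Trm

variable {F : Type}

/-- Lifting of a renaming under a binder. -/
def upRen (ρ : ℕ → ℕ) : ℕ → ℕ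
  | 0 => 0
  | n + 1 => ρ n + 1

/-- Renaming of (de Bruijn) variables. -/
def rename (ρ : ℕ → ℕ) : Trm F → Trm F
  | .type => .type
  | .kind => .kind
  | .var n => .var (ρ n)
  | .sym f => .sym f
  | .pi A B => .pi (rename ρ A) (rename (upRen ρ) B)
  | .app t u => .app (rename ρ t) (rename ρ u)
  | .lam A b => .lam (rename ρ A) (rename (upRen ρ) b)

/-- Lifting of a substitution under a binder. -/
def up (σ : ℕ → Trm F) : ℕ → Trm F
  | 0 => .var 0
  | n + 1 => rename Nat.succ (σ n)

/-- Capture-avoiding (parallel) substitution. -/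
def subst (σ : ℕ → Trm F) : Trm F → Trm F
  | .type => .type
  | .kind => .kind
  | .var n => σ n
  | .sym f => .sym f
  | .pi A B => .pi (subst σ A) (subst (up σ) B)
  | .app t u => .app (subst σ t) (subst σ u)
  | .lam A b => .lam (subst σ A) (subst (up σ) b)

/-- Cons of a term on a substitution: `scons a σ` maps `0` to `a` and `n+1` to `σ n`. -/
def scons (a : Trm F) (σ : ℕ → Trm F) : ℕ → Trm F
  | 0 => a
  | n + 1 => σ n

/-- Substitution of the first free variable: `t[x ↦ a]`. -/
def subst1 (a t : Trm F) : Trm F := subst (scons a .var) t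

/-- Shifting of all free variables. -/
def shift : Trm F → Trm F := rename Nat.succ

/-- Application of a head term to a list of arguments: `appList h [t1,…,tn] = h t1 … tn`. -/
def appList (h : Trm F) : List (Trm F) → Trm F
  | [] => h
  | a :: as => appList (.app h a) as

/-- Free (de Bruijn) variables of a term. -/
def FV : Trm F → Set ℕ
  | .type => ∅
  | .kind => ∅
  | .var n => {n}
  | .sym _ => ∅
  | .pi A B => FV A ∪ {n | n + 1 ∈ FV B}
  | .app t u => FV t ∪ FV u
  | .lam A b => FV A ∪ {n | n + 1 ∈ FV b}

/-- The class 𝕂 of kinds: `K = TYPE | Πx:t.K`. -/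
def IsKind : Trm F → Prop
  | .type => True
  | .pi _ B => IsKind B
  | _ => False

/-- Sorts: `TYPE` and `KIND`. -/
def IsSort (s : Trm F) : Prop := s = .type ∨ s = .kind

/-- The product arity of a term: the number of leading products. -/
def piArity : Trm F → ℕ
  | .pi _ B => piArity B + 1
  | _ => 0

/-- Strip `n` leading products. -/
def piCodN : ℕ → Trm F → Trm F
  | 0, T => T
  | n + 1, .pi _ B => piCodN n B
  | _ + 1, T => T

/-- The first `n` domains of the leading products, as a de Bruijn context
(type of variable `0` first, i.e. innermost first). -/
def teleN : ℕ → Trm F → List (Trm F)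
  | 0, _ => []
  | n + 1, .pi A B => teleN n B ++ [A]
  | _ + 1, _ => []

/-- The full telescope of leading products, as a de Bruijn context. -/
def telescope (T : Trm F) : List (Trm F) := teleN (piArity T) T

/-- The domains of the leading products, outermost first. -/
def piDoms : Trm F → List (Trm F)
  | .pi A B => A :: piDoms B
  | _ => []

end Trm

/-- The subterm relation (reflexive and transitive). -/
inductive Subterm {F : Type} : Trm F → Trm F → Prop
  | refl (t : Trm F) : Subterm t t
  | piL {t A B} : Subterm t A → Subterm t (.pi A B)
  | piR {t A B} : Subterm t B → Subterm t (.pi A B)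
  | appL {t u v} : Subterm t u → Subterm t (.app u v)
  | appR {t u v} : Subterm t v → Subterm t (.app u v)
  | lamL {t A b} : Subterm t A → Subterm t (.lam A b)
  | lamR {t A b} : Subterm t b → Subterm t (.lam A b)

/-! # Rewriting -/

/-- A set of rewriting rules `l → r`. -/
abbrev Rules (F : Type) := Set (Trm F × Trm F)

/-- `R` is a rewriting system: for every rule `l → r`, `FV(r) ⊆ FV(l)` and
`l` is of the form `f l⃗`. -/
def IsRewriteSystem {F : Type} (R : Rules F) : Prop :=
  ∀ p ∈ R, Trm.FV p.2 ⊆ Trm.FV p.1 ∧ ∃ (f : F) (ls : List (Trm F)), p.1 = Trm.appList (.sym f) ls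

/-- A symbol is defined if it heads the left-hand side of some rule. -/
def Defined {F : Type} (R : Rules F) (f : F) : Prop :=
  ∃ (ls : List (Trm F)) (r : Trm F), (Trm.appList (.sym f) ls, r) ∈ R

/-- One-step reduction `→ = →β ∪ →R`: β-reduction together with the closure of the
rules of `R` by substitution and context. -/
inductive Red {F : Type} (R : Rules F) : Trm F → Trm F → Prop
  | beta (A b a : Trm F) : Red R (.app (.lam A b) a) (Trm.subst1 a b)
  | rule {l r : Trm F} (σ : ℕ → Trm F) : (l, r) ∈ R → Red R (Trm.subst σ l) (Trm.subst σ r)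
  | appL {t t' u} : Red R t t' → Red R (.app t u) (.app t' u)
  | appR {t u u'} : Red R u u' → Red R (.app t u) (.app t u')
  | piL {A A' B} : Red R A A' → Red R (.pi A B) (.pi A' B)
  | piR {A B B'} : Red R B B' → Red R (.pi A B) (.pi A B')
  | lamL {A A' b} : Red R A A' → Red R (.lam A b) (.lam A' b)
  | lamR {A b b'} : Red R b b' → Red R (.lam A b) (.lam A b')

/-- Multi-step reduction `→*`. -/
def RedStar {F : Type} (R : Rules F) : Trm F → Trm F → Prop := Relation.ReflTransGen (Red R)

/-- Joinability `↓`. -/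
def Joinable {F : Type} (R : Rules F) (t u : Trm F) : Prop :=
  ∃ v, RedStar R t v ∧ RedStar R u v

/-- Local confluence: `← · → ⊆ →* · *←`. -/
def LocallyConfluent {F : Type} (R : Rules F) : Prop :=
  ∀ t u v, Red R t u → Red R t v → Joinable R u v

/-- `t` is strongly normalizing (terminating): no infinite reduction sequence from `t`. -/
def SN {F : Type} (R : Rules F) (t : Trm F) : Prop := Acc (fun a b => Red R b a) t

/-- The set of strongly normalizing terms. -/
def SNset {F : Type} (R : Rules F) : Set (Trm F) := {t | SN R t}

/-- `t` is in normal form. -/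
def NormalForm {F : Type} (R : Rules F) (t : Trm F) : Prop := ∀ u, ¬ Red R t u

/-- Neutral terms: `(λx:A.t)u v⃗`, `x v⃗`, or `f v⃗` where every rule `f l⃗ → r ∈ R`
satisfies `|l⃗| ≤ |v⃗|`. -/
def Neutral {F : Type} (R : Rules F) (t : Trm F) : Prop :=
  (∃ (A b a : Trm F) (vs : List (Trm F)), t = Trm.appList (.app (.lam A b) a) vs) ∨
  (∃ (x : ℕ) (vs : List (Trm F)), t = Trm.appList (.var x) vs) ∨
  (∃ (f : F) (vs : List (Trm F)), t = Trm.appList (.sym f) vs ∧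
    ∀ (ls : List (Trm F)) (r : Trm F), (Trm.appList (.sym f) ls, r) ∈ R → ls.length ≤ vs.length)

/-- Computability predicates: `S ⊆ SN`, `S` is closed under reduction, and `S` contains
every neutral term all of whose one-step reducts are in `S`. -/
def IsCompPred {F : Type} (R : Rules F) (S : Set (Trm F)) : Prop :=
  S ⊆ SNset R ∧ (∀ t ∈ S, ∀ u, Red R t u → u ∈ S) ∧
  (∀ t, Neutral R t → (∀ u, Red R t u → u ∈ S) → t ∈ S)

/-! # Typing: λP extended with function symbols and conversion modulo `→` -/

/-- The typing rules of λΠ/R: the rules of λP (in de Bruijn presentation) with the extra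
rule (fun) `⊢ f : Θ_f` and conversion up to joinability for `→`. -/
inductive Typing {F : Type} (R : Rules F) (Θ sΘ : F → Trm F) :
    List (Trm F) → Trm F → Trm F → Prop
  | ax : Typing R Θ sΘ [] .type .kind
  | var {Γ A s} : Trm.IsSort s → Typing R Θ sΘ Γ A s →
      Typing R Θ sΘ (A :: Γ) (.var 0) (Trm.shift A)
  | weak {Γ A s b B} : Trm.IsSort s → Typing R Θ sΘ Γ A s → Typing R Θ sΘ Γ b B →
      Typing R Θ sΘ (A :: Γ) (Trm.shift b) (Trm.shift B)
  | prod {Γ A B s} : Trm.IsSort s → Typing R Θ sΘ Γ A .type → Typing R Θ sΘ (A :: Γ) B s →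
      Typing R Θ sΘ Γ (.pi A B) s
  | abs {Γ A b B s} : Trm.IsSort s → Typing R Θ sΘ (A :: Γ) b B →
      Typing R Θ sΘ Γ (.pi A B) s → Typing R Θ sΘ Γ (.lam A b) (.pi A B)
  | app {Γ t a A B} : Typing R Θ sΘ Γ t (.pi A B) → Typing R Θ sΘ Γ a A →
      Typing R Θ sΘ Γ (.app t a) (Trm.subst1 a B)
  | conv {Γ a A B s} : Typing R Θ sΘ Γ a A → Joinable R A B → Typing R Θ sΘ Γ B s →
      Trm.IsSort s → Typing R Θ sΘ Γ a B
  | symb (f : F) : Trm.IsSort (sΘ f) → Typing R Θ sΘ [] (Θ f) (sΘ f) →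
      Typing R Θ sΘ [] (.sym f) (Θ f)

/-- `→` preserves typing (subject reduction). -/
def PresTyping {F : Type} (R : Rules F) (Θ sΘ : F → Trm F) : Prop :=
  ∀ Γ t u T, Typing R Θ sΘ Γ t T → Red R t u → Typing R Θ sΘ Γ u T

/-- A substitution `γ` is well-typed from `Δ` to `Γ` (for a generic typing judgment `Ty`):
for all `(x : T) ∈ Δ`, `Ty Γ (xγ) (Tγ)`. -/
def SubstTyped {F : Type} (Ty : List (Trm F) → Trm F → Trm F → Prop)
    (Γ : List (Trm F)) (γ : ℕ → Trm F) (Δ : List (Trm F)) : Prop :=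
  ∀ i A, Δ[i]? = some A → Ty Γ (γ i) (Trm.subst (fun j => γ (j + i + 1)) A)

/-! # Interpretation of types as computability predicates -/

/-- `𝕀`: partial functions from terms to sets of terms. -/
abbrev Interp (F : Type) := Trm F → Part (Set (Trm F))

/-- Graph inclusion of partial functions. -/
def InterpLE {F : Type} (I J : Interp F) : Prop := ∀ T S, S ∈ I T → S ∈ J T

/-- `I` is the least fixpoint of `φ` on `𝕀` (ordered by graph inclusion). -/
def IsLfpInterp {F : Type} (φ : Interp F → Interp F) (I : Interp F) : Prop :=
  φ I = I ∧ ∀ J, φ J = J → InterpLE I J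

/-- The domain `D(I)`: terminating terms `T` such that whenever `T →* Πx:A.B`,
`A ∈ dom(I)` and `B[x↦a] ∈ dom(I)` for all `a ∈ I(A)`. -/
def domD {F : Type} (R : Rules F) (I : Interp F) : Set (Trm F) :=
  {T | SN R T ∧ ∀ A B, RedStar R T (.pi A B) →
    (I A).Dom ∧ ∀ S ∈ I A, ∀ a ∈ S, (I (Trm.subst1 a B)).Dom}

/-- `{t | ∀ a ∈ I(A), t a ∈ I(B[x↦a])}` (relational reading of the partial function `I`). -/
def piPart {F : Type} (I : Interp F) (A B : Trm F) : Set (Trm F) :=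
  {t | ∀ S ∈ I A, ∀ a ∈ S, ∀ S' ∈ I (Trm.subst1 a B), Trm.app t a ∈ S'}

open Classical in
/-- The monotone function `F : 𝕀 → 𝕀`: `dom(F(I)) = D(I)`; `F(I)(T) = SN` if the normal
form of `T` is not a product; `F(I)(T) = {t | ∀ a ∈ I(A), t a ∈ I(B[x↦a])}` if the normal
form of `T` is `Πx:A.B`. -/
noncomputable def interpF {F : Type} (R : Rules F) (I : Interp F) : Interp F := fun T =>
  ⟨T ∈ domD R I, fun _ =>
    if h : ∃ A B, RedStar R T (.pi A B) ∧ NormalForm R (.pi A B) then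
      piPart I h.choose h.choose_spec.choose
    else SNset R⟩

/-- The value of a partial interpretation at `T` (as a set). -/
def partMem {F : Type} (I : Interp F) (T : Trm F) : Set (Trm F) := {t | ∀ S ∈ I T, t ∈ S}

open Classical in
/-- The interpretation `⟦T⟧σ` of a term `T` wrt a substitution `σ`, relative to the least
fixpoint `I = ℐ` of `interpF`: `⟦s⟧σ = 𝒟` for `s` a sort;
`⟦Πx:A.K⟧σ = {t | ∀ a ∈ ⟦A⟧σ, t a ∈ ⟦K⟧[x↦a,σ]}` for `K` a kind;
`⟦T⟧σ = ℐ(Tσ)` if `T` is neither a kind nor `KIND` and `Tσ ∈ 𝒟`; `⟦T⟧σ = SN` otherwise. -/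
noncomputable def interp {F : Type} (R : Rules F) (I : Interp F) :
    Trm F → (ℕ → Trm F) → Set (Trm F)
  | .type, _ => domD R I
  | .kind, _ => domD R I
  | .pi A B, σ =>
      if Trm.IsKind B then
        {t | ∀ a ∈ interp R I A σ, Trm.app t a ∈ interp R I B (Trm.scons a σ)}
      else if Trm.subst σ (.pi A B) ∈ domD R I then partMem I (Trm.subst σ (.pi A B))
      else SNset R
  | .var n, σ =>
      if Trm.subst σ (.var n) ∈ domD R I then partMem I (Trm.subst σ (.var n)) else SNset R
  | .sym g, σ =>
      if Trm.subst σ (.sym g) ∈ domD R I then partMem I (Trm.subst σ (.sym g)) else SNset R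
  | .app t u, σ =>
      if Trm.subst σ (.app t u) ∈ domD R I then partMem I (Trm.subst σ (.app t u)) else SNset R
  | .lam A b, σ =>
      if Trm.subst σ (.lam A b) ∈ domD R I then partMem I (Trm.subst σ (.lam A b)) else SNset R

/-- `σ ⊨ Γ`: a substitution is adequate wrt an environment. -/
def Models {F : Type} (R : Rules F) (I : Interp F) (σ : ℕ → Trm F) (Γ : List (Trm F)) : Prop :=
  ∀ i A, Γ[i]? = some A → σ i ∈ interp R I A (fun j => σ (j + i + 1))

/-- The typing map `Θ` is adequate: `f ∈ ⟦Θ_f⟧` whenever `⊢ Θ_f : s_f` and `Θ_f ∈ ⟦s_f⟧`. -/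
def Adequate {F : Type} (R : Rules F) (Θ sΘ : F → Trm F) (I : Interp F) : Prop :=
  ∀ f : F, Typing R Θ sΘ [] (Θ f) (sΘ f) → Θ f ∈ interp R I (sΘ f) Trm.var →
    Trm.sym f ∈ interp R I (Θ f) Trm.var

/-- The substitution `[x⃗ ↦ l⃗]` (where `ls` lists the images of variables `0, 1, …`). -/
def mkSubst {F : Type} (ls : List (Trm F)) : ℕ → Trm F := fun i =>
  (ls[i]?).getD (.var (i - ls.length))

/-- Composition of substitutions: `x ↦ (xγ)σ`. -/
def compSubst {F : Type} (γ σ : ℕ → Trm F) : ℕ → Trm F := fun i => Trm.subst σ (γ i)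

/-- The set `ℂ` of terms `f t⃗` with `|t⃗| = arit(Θ_f)`, `⊢ Θ_f : s_f`, `Θ_f ∈ ⟦s_f⟧` and
`[x⃗↦t⃗] ⊨ Γ_f`. -/
def CC {F : Type} (R : Rules F) (Θ sΘ : F → Trm F) (I : Interp F) : Set (Trm F) :=
  {t | ∃ (f : F) (ts : List (Trm F)), t = Trm.appList (.sym f) ts ∧
    ts.length = Trm.piArity (Θ f) ∧
    Typing R Θ sΘ [] (Θ f) (sΘ f) ∧ Θ f ∈ interp R I (sΘ f) Trm.var ∧
    Models R I (mkSubst ts.reverse) (Trm.telescope (Θ f))}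

/-! # Dependency pairs -/

/-- Occurrences of `p` in a term, not at the root, such that `p` is not further applied
(i.e. `p` collects all the arguments of its head at this occurrence). -/
inductive MaxOccNR {F : Type} (p : Trm F) : Trm F → Prop
  | appL {u v} : MaxOccNR p u → MaxOccNR p (.app u v)
  | appR {u v} : MaxOccNR p v → MaxOccNR p (.app u v)
  | appRroot {u} : MaxOccNR p (.app u p)
  | piL {A B} : MaxOccNR p A → MaxOccNR p (.pi A B)
  | piLroot {B} : MaxOccNR p (.pi p B)
  | piR {A B} : MaxOccNR p B → MaxOccNR p (.pi A B)
  | piRroot {A} : MaxOccNR p (.pi A p)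
  | lamL {A b} : MaxOccNR p A → MaxOccNR p (.lam A b)
  | lamLroot {b} : MaxOccNR p (.lam p b)
  | lamR {A b} : MaxOccNR p b → MaxOccNR p (.lam A b)
  | lamRroot {A} : MaxOccNR p (.lam A p)

/-- `p` occurs in `t` as a maximal application. -/
def MaxOcc {F : Type} (p t : Trm F) : Prop := t = p ∨ MaxOccNR p t

/-- Dependency pairs: `f l⃗ > g m⃗` iff there is a rule `f l⃗ → r ∈ R`, `g` is defined and
`g m⃗` is a subterm of `r` such that `m⃗` are all the arguments to which `g` is applied. -/
def DepPair {F : Type} (R : Rules F) (f : F) (ls : List (Trm F)) (g : F)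
    (ms : List (Trm F)) : Prop :=
  Defined R g ∧ ∃ r, (Trm.appList (.sym f) ls, r) ∈ R ∧ MaxOcc (Trm.appList (.sym g) ms) r

/-- `f t⃗ →arg f u⃗`: reduction of exactly one argument. -/
def ArgRed {F : Type} (R : Rules F) (t u : Trm F) : Prop :=
  ∃ (f : F) (pre post : List (Trm F)) (a b : Trm F), Red R a b ∧
    t = Trm.appList (.sym f) (pre ++ a :: post) ∧ u = Trm.appList (.sym f) (pre ++ b :: post)

/-- `>ₛ`: the closure of the dependency pair relation by substitution and left-application:
`f t₁…t_p >ₛ g u₁…u_q` iff there are a dependency pair `f l₁…l_i > g m₁…m_j` with `i ≤ p`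
and `j ≤ q` and a substitution `σ` such that `t_k →* l_kσ` for `k ≤ i` and `m_kσ = u_k`
for `k ≤ j`. -/
def GTsub {F : Type} (R : Rules F) (t u : Trm F) : Prop :=
  ∃ (f g : F) (ts us ls ms : List (Trm F)) (σ : ℕ → Trm F),
    t = Trm.appList (.sym f) ts ∧ u = Trm.appList (.sym g) us ∧
    DepPair R f ls g ms ∧ ls.length ≤ ts.length ∧ ms.length ≤ us.length ∧
    (∀ (k : ℕ) (tk lk : Trm F), ts[k]? = some tk → ls[k]? = some lk → RedStar R tk (Trm.subst σ lk)) ∧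
    (∀ (k : ℕ) (mk : Trm F), ms[k]? = some mk → us[k]? = some (Trm.subst σ mk))

/-- The call relation `≻̃ = →arg* · >ₛ` on `ℂ`. -/
def CallRel {F : Type} (R : Rules F) (Θ sΘ : F → Trm F) (I : Interp F) (t u : Trm F) : Prop :=
  t ∈ CC R Θ sΘ I ∧ u ∈ CC R Θ sΘ I ∧
    ∃ v, Relation.ReflTransGen (ArgRed R) t v ∧ GTsub R v u

/-! # Precedence and well-structured systems -/

/-- `f ⪰ g` (one step): `g` occurs in `Θ_f` or in the right-hand side of a rule of `f`. -/
def PrecBase {F : Type} (R : Rules F) (Θ : F → Trm F) (f g : F) : Prop :=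
  Subterm (.sym g) (Θ f) ∨
  ∃ (ls : List (Trm F)) (r : Trm F), (Trm.appList (.sym f) ls, r) ∈ R ∧ Subterm (.sym g) r

/-- `⪰`: the smallest quasi-order containing `PrecBase`. -/
def Preceq {F : Type} (R : Rules F) (Θ : F → Trm F) : F → F → Prop :=
  Relation.ReflTransGen (PrecBase R Θ)

/-- `≻`: the strict part of `⪰`. -/
def Prec {F : Type} (R : Rules F) (Θ : F → Trm F) (f g : F) : Prop :=
  Preceq R Θ f g ∧ ¬ Preceq R Θ g f

/-- The restricted type system `⊢_{≺ f}`: as `Typing`, but function symbols may only be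
introduced when strictly smaller than `f` in the precedence. -/
inductive LTyp {F : Type} (R : Rules F) (Θ sΘ : F → Trm F) (f : F) :
    List (Trm F) → Trm F → Trm F → Prop
  | ax : LTyp R Θ sΘ f [] .type .kind
  | var {Γ A s} : Trm.IsSort s → LTyp R Θ sΘ f Γ A s →
      LTyp R Θ sΘ f (A :: Γ) (.var 0) (Trm.shift A)
  | weak {Γ A s b B} : Trm.IsSort s → LTyp R Θ sΘ f Γ A s → LTyp R Θ sΘ f Γ b B →
      LTyp R Θ sΘ f (A :: Γ) (Trm.shift b) (Trm.shift B)
  | prod {Γ A B s} : Trm.IsSort s → LTyp R Θ sΘ f Γ A .type → LTyp R Θ sΘ f (A :: Γ) B s →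
      LTyp R Θ sΘ f Γ (.pi A B) s
  | abs {Γ A b B s} : Trm.IsSort s → LTyp R Θ sΘ f (A :: Γ) b B →
      LTyp R Θ sΘ f Γ (.pi A B) s → LTyp R Θ sΘ f Γ (.lam A b) (.pi A B)
  | app {Γ t a A B} : LTyp R Θ sΘ f Γ t (.pi A B) → LTyp R Θ sΘ f Γ a A →
      LTyp R Θ sΘ f Γ (.app t a) (Trm.subst1 a B)
  | conv {Γ a A B s} : LTyp R Θ sΘ f Γ a A → Joinable R A B → LTyp R Θ sΘ f Γ B s →
      Trm.IsSort s → LTyp R Θ sΘ f Γ a B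
  | symb (g : F) : Prec R Θ f g → Trm.IsSort (sΘ g) → LTyp R Θ sΘ f [] (Θ g) (sΘ g) →
      LTyp R Θ sΘ f [] (.sym g) (Θ g)

/-- The arguments `y⃗γ = [y₁γ, …, y_jγ]` of an instantiated dependency pair right-hand
side, where `y_j` is de Bruijn variable `0`. -/
def dpArgs {F : Type} (γ : ℕ → Trm F) (j : ℕ) : List (Trm F) :=
  (List.range j).reverse.map γ

/-- The restricted type system `⊢_{f l⃗}` (computability closure): as `Typing`, except that
types are required to be typable using symbols smaller than `f` only, and function symbols
are introduced either as undefined constants or through instances of dependency pairs of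
`f l⃗`. -/
inductive RTyp {F : Type} (R : Rules F) (Θ sΘ : F → Trm F) (f : F) (ls : List (Trm F)) :
    List (Trm F) → Trm F → Trm F → Prop
  | ax : RTyp R Θ sΘ f ls [] .type .kind
  | var {Γ A s} : Trm.IsSort s → LTyp R Θ sΘ f Γ A s →
      RTyp R Θ sΘ f ls (A :: Γ) (.var 0) (Trm.shift A)
  | weak {Γ A s b B} : Trm.IsSort s → LTyp R Θ sΘ f Γ A s → RTyp R Θ sΘ f ls Γ b B →
      RTyp R Θ sΘ f ls (A :: Γ) (Trm.shift b) (Trm.shift B)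
  | prod {Γ A B s} : Trm.IsSort s → RTyp R Θ sΘ f ls Γ A .type →
      RTyp R Θ sΘ f ls (A :: Γ) B s → RTyp R Θ sΘ f ls Γ (.pi A B) s
  | abs {Γ A b B s} : Trm.IsSort s → RTyp R Θ sΘ f ls (A :: Γ) b B →
      LTyp R Θ sΘ f Γ (.pi A B) s → RTyp R Θ sΘ f ls Γ (.lam A b) (.pi A B)
  | app {Γ t a A B s} : Trm.IsSort s → RTyp R Θ sΘ f ls Γ t (.pi A B) →
      RTyp R Θ sΘ f ls Γ a A → LTyp R Θ sΘ f Γ (.pi A B) s →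
      RTyp R Θ sΘ f ls Γ (.app t a) (Trm.subst1 a B)
  | conv {Γ a A B s s'} : Trm.IsSort s → Trm.IsSort s' → RTyp R Θ sΘ f ls Γ a A →
      Joinable R A B → LTyp R Θ sΘ f Γ B s → LTyp R Θ sΘ f Γ A s' →
      RTyp R Θ sΘ f ls Γ a B
  | dp {Γ : List (Trm F)} (g : F) (γ : ℕ → Trm F) (j : ℕ) :
      j ≤ Trm.piArity (Θ g) → Trm.IsSort (sΘ g) → LTyp R Θ sΘ f [] (Θ g) (sΘ g) →
      (∀ i A, (Trm.teleN j (Θ g))[i]? = some A →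
        RTyp R Θ sΘ f ls Γ (γ i) (Trm.subst (fun k => γ (k + i + 1)) A)) →
      DepPair R f ls g (dpArgs γ j) →
      RTyp R Θ sΘ f ls Γ (Trm.appList (.sym g) (dpArgs γ j)) (Trm.subst γ (Trm.piCodN j (Θ g)))
  | const (g : F) : ¬ Defined R g → Trm.IsSort (sΘ g) → LTyp R Θ sΘ f [] (Θ g) (sΘ g) →
      RTyp R Θ sΘ f ls [] (.sym g) (Θ g)

/-- `R` is well-structured (wrt the assignment `Δ` of an environment to every rule):
(a) `≻` is well-founded; (b) `|l⃗| ≤ arit(Θ_f)` for every rule `f l⃗ → r`;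
(c) `|m⃗| ≤ arit(Θ_g)` for every dependency pair `f l⃗ > g m⃗`;
(d) `Δ_{f l⃗→r} ⊢_{f l⃗} r : U[x⃗↦l⃗]` for every rule `f l⃗ → r`, where `Θ_f = Πx⃗:T⃗.U`. -/
def WellStructured {F : Type} (R : Rules F) (Θ sΘ : F → Trm F)
    (Δ : Trm F → Trm F → List (Trm F)) : Prop :=
  WellFounded (fun g f => Prec R Θ f g) ∧
  (∀ l r, (l, r) ∈ R → ∀ (f : F) ls, l = Trm.appList (.sym f) ls →
    ls.length ≤ Trm.piArity (Θ f)) ∧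
  (∀ (f : F) ls (g : F) ms, DepPair R f ls g ms → ms.length ≤ Trm.piArity (Θ g)) ∧
  (∀ l r, (l, r) ∈ R → ∀ (f : F) ls, l = Trm.appList (.sym f) ls →
    RTyp R Θ sΘ f ls (Δ l r) r (Trm.subst (mkSubst ls.reverse) (Trm.piCodN ls.length (Θ f))))

/-- `R` is accessible: for every rule `f l⃗ → r` with `Θ_f = Πx⃗:T⃗.U`, `|x⃗| = |l⃗|`, and
every substitution `σ`, `σ ⊨ Δ_{f l⃗→r}` whenever `⊢ Θ_f : s_f`, `Θ_f ∈ ⟦s_f⟧` and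
`[x⃗↦l⃗]σ ⊨ x⃗:T⃗`. -/
def Accessible {F : Type} (R : Rules F) (Θ sΘ : F → Trm F) (I : Interp F)
    (Δ : Trm F → Trm F → List (Trm F)) : Prop :=
  ∀ l r, (l, r) ∈ R → ∀ (f : F) ls, l = Trm.appList (.sym f) ls → ∀ σ : ℕ → Trm F,
    Typing R Θ sΘ [] (Θ f) (sΘ f) → Θ f ∈ interp R I (sΘ f) Trm.var →
    Models R I (compSubst (mkSubst ls.reverse) σ) (Trm.teleN ls.length (Θ f)) →
    Models R I σ (Δ l r)

/-- A term in `𝕂 ∪ {KIND}`. -/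
def IsKindLike {F : Type} (t : Trm F) : Prop := Trm.IsKind t ∨ t = .kind

/-- `R` is plain function-passing (PFP): for every rule `f l⃗ → r` with `Θ_f = Πx⃗:T⃗.U` and
`|x⃗| = |l⃗|`, no `l_i` is a kind or `KIND`, and every `(y : T) ∈ Δ_{f l⃗→r}` satisfies:
either there is `i` with `y = l_i` and `T = T_i[x⃗↦l⃗]`, or `y ∈ FV(l_i)` and `T = D t⃗`
with `D` undefined and `|t⃗| = arit(Θ_D)`. -/
def PFP {F : Type} (R : Rules F) (Θ : F → Trm F) (Δ : Trm F → Trm F → List (Trm F)) : Prop :=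
  ∀ l r, (l, r) ∈ R → ∀ (f : F) ls, l = Trm.appList (.sym f) ls →
    (∀ li ∈ ls, ¬ IsKindLike li) ∧
    (∀ i A, (Δ l r)[i]? = some A →
      (∃ (k : ℕ) (Tk : Trm F), ls[k]? = some (Trm.var i) ∧ (Trm.piDoms (Θ f))[k]? = some Tk ∧
        Trm.rename (fun j => j + i + 1) A = Trm.subst (mkSubst ((ls.take k).reverse)) Tk) ∨
      ((∃ (k : ℕ) (lk : Trm F), ls[k]? = some lk ∧ i ∈ Trm.FV lk) ∧
        ∃ (D : F) (ts : List (Trm F)), Trm.rename (fun j => j + i + 1) A =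
          Trm.appList (.sym D) ts ∧ ¬ Defined R D ∧ ts.length = Trm.piArity (Θ D)))

/-! # Size-change termination -/

/-- Entries of size-change matrices: `−1`, `0` or `∞`. -/
inductive SCTe : Type
  | minusOne : SCTe
  | zero : SCTe
  | infty : SCTe
deriving DecidableEq

/-- Min-plus multiplication of entries (addition, truncated at `−1`). -/
def SCTe.comp : SCTe → SCTe → SCTe
  | .infty, _ => .infty
  | _, .infty => .infty
  | .minusOne, _ => .minusOne
  | _, .minusOne => .minusOne
  | .zero, .zero => .zero

/-- Minimum of entries (`−1 < 0 < ∞`). -/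
def SCTe.min : SCTe → SCTe → SCTe
  | .minusOne, _ => .minusOne
  | _, .minusOne => .minusOne
  | .zero, _ => .zero
  | .infty, x => x

/-- Base of the relation `⊵`: `f t₁…t_n ⊵ t_i` for `f ∈ F`. -/
def ArgSubBase {F : Type} (t u : Trm F) : Prop :=
  ∃ (f : F) (ts : List (Trm F)), t = Trm.appList (.sym f) ts ∧ u ∈ ts

/-- `⊵`: the smallest transitive relation such that `f t₁…t_n ⊵ t_i` for `f ∈ F`. -/
def ArgGT {F : Type} : Trm F → Trm F → Prop := Relation.TransGen ArgSubBase

open Classical in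
/-- The size-change matrix of a dependency pair `f l₁…l_p > g m₁…m_q`:
`a_{ij} = −1` if `l_i ⊵ m_j`, `a_{ij} = 0` if `l_i = m_j`, `a_{ij} = ∞` otherwise
(in particular if `i > p` or `j > q`). -/
noncomputable def dpMatrix {F : Type} (ls ms : List (Trm F)) : ℕ → ℕ → SCTe := fun i j =>
  match ls[i]?, ms[j]? with
  | some li, some mj =>
      if ArgGT li mj then .minusOne else if li = mj then .zero else .infty
  | _, _ => .infty

/-- Min-plus product of matrices, the middle dimension being `d`. -/
def matComp (d : ℕ) (M N : ℕ → ℕ → SCTe) : ℕ → ℕ → SCTe := fun i j =>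
  ((List.range d).map fun k => (M i k).comp (N k j)).foldr SCTe.min .infty

/-- The transitive closure of the call graph of `R`: edges are labeled by the matrices of
the dependency pairs, multiplied in the min-plus semiring along paths. -/
inductive TCEdge {F : Type} (R : Rules F) (Θ : F → Trm F) : F → F → (ℕ → ℕ → SCTe) → Prop
  | base {f g : F} {ls ms : List (Trm F)} : DepPair R f ls g ms →
      TCEdge R Θ f g (dpMatrix ls ms)
  | comp {f g h : F} {M N : ℕ → ℕ → SCTe} : TCEdge R Θ f g M → TCEdge R Θ g h N →
      TCEdge R Θ f h (matComp (Trm.piArity (Θ g)) M N)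

/-- `R` is size-change terminating: in the transitive closure of the call graph, every
idempotent matrix labeling a loop has some `−1` on its diagonal. -/
def SCT {F : Type} (R : Rules F) (Θ : F → Trm F) : Prop :=
  ∀ (f : F) (M : ℕ → ℕ → SCTe), TCEdge R Θ f f M → matComp (Trm.piArity (Θ f)) M M = M →
    ∃ i < Trm.piArity (Θ f), M i i = SCTe.minusOne

/-! # Renaming and substitution calculus -/

namespace Trm

variable {F : Type}

theorem rename_rename (t : Trm F) (ρ τ : ℕ → ℕ) :
    rename τ (rename ρ t) = rename (fun n => τ (ρ n)) t := by
  have hup : ∀ ρ τ : ℕ → ℕ, (fun n => upRen τ (upRen ρ n)) = upRen (fun n => τ (ρ n)) := by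
    intro ρ τ; funext n; cases n <;> rfl
  induction t generalizing ρ τ <;> simp_all [rename]

theorem rename_id (t : Trm F) : rename (fun n => n) t = t := by
  have hup : upRen (fun n => n) = fun n => n := by funext n; cases n <;> rfl
  induction t <;> simp_all [rename]

theorem subst_rename (t : Trm F) (ρ : ℕ → ℕ) (σ : ℕ → Trm F) :
    subst σ (rename ρ t) = subst (fun n => σ (ρ n)) t := by
  have hup : ∀ (ρ : ℕ → ℕ) (σ : ℕ → Trm F),
      (fun n => up σ (upRen ρ n)) = up (fun n => σ (ρ n)) := by
    intro ρ σ; funext n; cases n <;> rfl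
  induction t generalizing ρ σ <;> simp_all [rename, subst]

theorem rename_subst (t : Trm F) (ρ : ℕ → ℕ) (σ : ℕ → Trm F) :
    rename ρ (subst σ t) = subst (fun n => rename ρ (σ n)) t := by
  have hup : ∀ (ρ : ℕ → ℕ) (σ : ℕ → Trm F),
      (fun n => rename (upRen ρ) (up σ n)) = up (fun n => rename ρ (σ n)) := by
    intro ρ σ; funext n
    cases n with
    | zero => rfl
    | succ n => simp [up, rename_rename, upRen]
  induction t generalizing ρ σ <;> simp_all [rename, subst]

theorem subst_subst (t : Trm F) (σ τ : ℕ → Trm F) :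
    subst τ (subst σ t) = subst (fun n => subst τ (σ n)) t := by
  have hup : ∀ σ τ : ℕ → Trm F,
      (fun n => subst (up τ) (up σ n)) = up (fun n => subst τ (σ n)) := by
    intro σ τ; funext n
    cases n with
    | zero => rfl
    | succ n => simp [up, subst_rename, rename_subst]
  induction t generalizing σ τ <;> simp_all [subst]

theorem subst_var (t : Trm F) : subst .var t = t := by
  have hup : up (.var : ℕ → Trm F) = .var := by funext n; cases n <;> rfl
  induction t <;> simp_all [subst]

theorem rename_eq_subst (t : Trm F) (ρ : ℕ → ℕ) : rename ρ t = subst (fun n => .var (ρ n)) t := by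
  have := rename_subst t ρ .var
  rwa [subst_var] at this

theorem subst1_subst_up (a t : Trm F) (σ : ℕ → Trm F) :
    subst1 a (subst (up σ) t) = subst (scons a σ) t := by
  rw [subst1, subst_subst]
  congr 1
  funext n
  cases n with
  | zero => rfl
  | succ n => exact (subst_rename _ _ _).trans (subst_var _)

theorem subst_subst1 (a t : Trm F) (σ : ℕ → Trm F) :
    subst σ (subst1 a t) = subst1 (subst σ a) (subst (up σ) t) := by
  rw [subst1_subst_up, subst1, subst_subst]
  congr 1
  funext n
  cases n <;> rfl

theorem isKind_rename (t : Trm F) (ρ : ℕ → ℕ) : IsKind (rename ρ t) ↔ IsKind t := by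
  induction t generalizing ρ <;> simp_all [rename, IsKind]

theorem rename_eq_kind {t : Trm F} {ρ : ℕ → ℕ} : rename ρ t = .kind ↔ t = .kind := by
  cases t <;> simp [rename]

/-- `KIND` does not occur in the term. -/
def KindFree : Trm F → Prop
  | .kind => False
  | .pi A B => KindFree A ∧ KindFree B
  | .app t u => KindFree t ∧ KindFree u
  | .lam A b => KindFree A ∧ KindFree b
  | _ => True

theorem KindFree.rename {t : Trm F} (h : KindFree t) (ρ : ℕ → ℕ) : KindFree (t.rename ρ) := by
  induction t generalizing ρ <;> simp_all [Trm.rename, KindFree]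

theorem KindFree.subst {t : Trm F} (h : KindFree t) {σ : ℕ → Trm F}
    (hσ : ∀ n, KindFree (σ n)) : KindFree (t.subst σ) := by
  have hup : ∀ σ : ℕ → Trm F, (∀ n, KindFree (σ n)) → ∀ n, KindFree (up σ n) := by
    intro σ hσ n
    cases n with
    | zero => trivial
    | succ n => exact (hσ n).rename _
  induction t generalizing σ <;> simp_all [Trm.subst, KindFree]

theorem KindFree.subst1 {a t : Trm F} (h : KindFree t) (ha : KindFree a) :
    KindFree (Trm.subst1 a t) := by
  refine h.subst fun n => ?_
  cases n with
  | zero => exact ha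
  | succ n => trivial

theorem appList_sym_eq (f : F) (ls : List (Trm F)) :
    appList (.sym f) ls = .sym f ∨ ∃ t u, appList (.sym f) ls = .app t u := by
  have happ : ∀ (ls : List (Trm F)) (t u : Trm F), ∃ t' u', appList (.app t u) ls = .app t' u' := by
    intro ls
    induction ls with
    | nil => exact fun t u => ⟨t, u, rfl⟩
    | cons a ls ih => exact fun t u => ih _ _
  cases ls with
  | nil => exact .inl rfl
  | cons a ls => exact .inr (happ ls _ _)

end Trm

/-! # Reduction -/

section Reduction

variable {F : Type} {R : Rules F}

theorem Red.subst {t t' : Trm F} (h : Red R t t') (σ : ℕ → Trm F) :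
    Red R (t.subst σ) (t'.subst σ) := by
  induction h generalizing σ with
  | beta A b a => rw [Trm.subst_subst1]; exact .beta _ _ _
  | rule τ hR => rw [Trm.subst_subst, Trm.subst_subst]; exact .rule _ hR
  | appL _ ih => exact .appL (ih σ)
  | appR _ ih => exact .appR (ih σ)
  | piL _ ih => exact .piL (ih σ)
  | piR _ ih => exact .piR (ih _)
  | lamL _ ih => exact .lamL (ih σ)
  | lamR _ ih => exact .lamR (ih _)

theorem RedStar.rename {t t' : Trm F} (h : RedStar R t t') (ρ : ℕ → ℕ) :
    RedStar R (t.rename ρ) (t'.rename ρ) := by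
  simp only [Trm.rename_eq_subst]
  induction h with
  | refl => exact .refl
  | tail _ hs ih => exact .tail ih (hs.subst _)

/-- A redex of a rule is headed by a function symbol. -/
theorem IsRewriteSystem.subst_lhs_eq (hRS : IsRewriteSystem R) {l r : Trm F} (h : (l, r) ∈ R)
    (σ : ℕ → Trm F) :
    (∃ f, l.subst σ = .sym f) ∨ ∃ t u, l.subst σ = .app t u := by
  obtain ⟨-, f, ls, hl⟩ := hRS _ h
  simp only at hl
  rcases Trm.appList_sym_eq f ls with he | ⟨t, u, he⟩
  · exact .inl ⟨f, by rw [hl, he]; rfl⟩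
  · exact .inr ⟨_, _, by rw [hl, he]; rfl⟩

theorem not_red_type (hRS : IsRewriteSystem R) (t : Trm F) : ¬ Red R .type t := by
  intro h
  generalize hs : Trm.type = s at h
  cases h with
  | rule σ hR => rcases hRS.subst_lhs_eq hR σ with ⟨_, he⟩ | ⟨_, _, he⟩ <;> simp [← hs] at he
  | _ => cases hs

theorem not_red_kind (hRS : IsRewriteSystem R) (t : Trm F) : ¬ Red R .kind t := by
  intro h
  generalize hs : Trm.kind = s at h
  cases h with
  | rule σ hR => rcases hRS.subst_lhs_eq hR σ with ⟨_, he⟩ | ⟨_, _, he⟩ <;> simp [← hs] at he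
  | _ => cases hs

theorem red_pi_cases (hRS : IsRewriteSystem R) {A B t : Trm F} (h : Red R (.pi A B) t) :
    (∃ A', Red R A A' ∧ t = .pi A' B) ∨ ∃ B', Red R B B' ∧ t = .pi A B' := by
  generalize hs : Trm.pi A B = s at h
  cases h with
  | rule σ hR => rcases hRS.subst_lhs_eq hR σ with ⟨_, he⟩ | ⟨_, _, he⟩ <;> simp [← hs] at he
  | piL h => cases hs; exact .inl ⟨_, h, rfl⟩
  | piR h => cases hs; exact .inr ⟨_, h, rfl⟩
  | _ => cases hs

theorem Trm.IsKind.red (hRS : IsRewriteSystem R) {T T' : Trm F} (hT : T.IsKind)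
    (h : Red R T T') : T'.IsKind := by
  induction T generalizing T' with
  | type => exact absurd h (not_red_type hRS _)
  | pi A B _ ihB =>
    rcases red_pi_cases hRS h with ⟨A', _, rfl⟩ | ⟨B', hB, rfl⟩
    · exact hT
    · exact (ihB hT hB : B'.IsKind)
  | _ => exact hT.elim

theorem NormalForm.eq_of_redStar {t u : Trm F} (ht : NormalForm R t) (h : RedStar R t u) :
    u = t := by
  rcases Relation.ReflTransGen.cases_head h with h | ⟨v, hv, _⟩
  · exact h.symm
  · exact absurd hv (ht v)

theorem SN.redStar {t u : Trm F} (h : SN R t) (hu : RedStar R t u) : SN R u := by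
  induction hu with
  | refl => exact h
  | tail _ hs ih => exact ih.inv hs

theorem SN.exists_normalForm {t : Trm F} (h : SN R t) : ∃ n, RedStar R t n ∧ NormalForm R n := by
  induction h with
  | intro t _ ih =>
    by_cases ht : NormalForm R t
    · exact ⟨t, .refl, ht⟩
    · simp only [NormalForm, not_forall, not_not] at ht
      obtain ⟨u, hu⟩ := ht
      obtain ⟨n, hn, hnf⟩ := ih u hu
      exact ⟨n, .head hu hn, hnf⟩

/-- Newman's lemma: a terminating term has at most one normal form. -/
theorem SN.normalForm_unique (hconf : LocallyConfluent R) {t : Trm F} (h : SN R t) :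
    ∀ {m n : Trm F}, RedStar R t m → NormalForm R m → RedStar R t n → NormalForm R n → m = n := by
  induction h with
  | intro t acc ih =>
    intro m n hm hmn hn hnn
    rcases Relation.ReflTransGen.cases_head hm with rfl | ⟨u, hu, hum⟩
    · exact (hmn.eq_of_redStar hn).symm
    rcases Relation.ReflTransGen.cases_head hn with rfl | ⟨v, hv, hvn⟩
    · exact hnn.eq_of_redStar hm
    obtain ⟨w, huw, hvw⟩ := hconf _ _ _ hu hv
    obtain ⟨k, hk, hkn⟩ := (SN.redStar (acc u hu) huw).exists_normalForm
    exact (ih u hu hum hmn (huw.trans hk) hkn).trans (ih v hv (hvw.trans hk) hkn hvn hnn)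

end Reduction

/-! # Kinds and typing -/

section Kinds

variable {F : Type} {R : Rules F} {Θ sΘ : F → Trm F}

/-- In a derivable judgment `KIND` occurs at most as the whole type. -/
theorem Typing.kindFree {Γ : List (Trm F)} {t T : Trm F} (h : Typing R Θ sΘ Γ t T) :
    t.KindFree ∧ (T = .kind ∨ T.KindFree) := by
  induction h with
  | ax => exact ⟨trivial, .inl rfl⟩
  | var _ _ ih => exact ⟨trivial, .inr (ih.1.rename _)⟩
  | weak _ _ _ _ ih =>
    refine ⟨ih.1.rename _, ih.2.imp ?_ fun h => h.rename _⟩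
    rintro rfl
    rfl
  | prod _ _ _ ihA ihB => exact ⟨⟨ihA.1, ihB.1⟩, ihB.2⟩
  | abs _ _ _ ihb ihP => exact ⟨⟨ihP.1.1, ihb.1⟩, .inr ihP.1⟩
  | app _ _ iht iha =>
    refine ⟨⟨iht.1, iha.1⟩, .inr ?_⟩
    rcases iht.2 with h | h
    · cases h
    · exact h.2.subst1 iha.1
  | conv _ _ _ _ iha ihB => exact ⟨iha.1, .inr ihB.1⟩
  | symb f _ _ ih => exact ⟨trivial, .inr ih.1⟩

theorem Typing.ne_kind {Γ : List (Trm F)} {t T : Trm F} (h : Typing R Θ sΘ Γ t T) :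
    t ≠ .kind := by
  rintro rfl
  exact h.kindFree.1

theorem Typing.redStar (hpres : PresTyping R Θ sΘ) {Γ : List (Trm F)} {t u T : Trm F}
    (h : Typing R Θ sΘ Γ t T) (hu : RedStar R t u) : Typing R Θ sΘ Γ u T := by
  induction hu with
  | refl => exact h
  | tail _ hs ih => exact hpres _ _ _ _ ih hs

/-- A typable kind has type `KIND`. -/
theorem Typing.type_eq_kind (hRS : IsRewriteSystem R) (hpres : PresTyping R Θ sΘ)
    {Γ : List (Trm F)} {t T : Trm F} (h : Typing R Θ sΘ Γ t T) (ht : t.IsKind) : T = .kind := by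
  induction h with
  | ax => rfl
  | weak _ _ _ _ ih =>
    rw [ih ((Trm.isKind_rename _ _).1 ht)]
    rfl
  | prod _ _ _ _ ihB => exact ihB ht
  | conv _ hj hB _ iha _ =>
    obtain ⟨v, hv, hBv⟩ := hj
    rw [iha ht] at hv
    rw [NormalForm.eq_of_redStar (not_red_kind hRS) hv] at hBv
    exact absurd rfl (hB.redStar hpres hBv).ne_kind
  | _ => exact ht.elim

/-- A term of type `KIND` is a kind. -/
theorem Typing.isKind {Γ : List (Trm F)} {t T : Trm F} (h : Typing R Θ sΘ Γ t T)
    (hT : T = .kind) : t.IsKind := by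
  induction h with
  | ax => trivial
  | var _ hA _ => exact absurd (Trm.rename_eq_kind.1 hT) hA.ne_kind
  | weak _ _ _ _ ih => exact (Trm.isKind_rename _ _).2 (ih (Trm.rename_eq_kind.1 hT))
  | prod _ _ _ _ ihB => exact ihB hT
  | abs => cases hT
  | app ht ha _ _ =>
    rcases ht.kindFree.2 with h | h
    · cases h
    · have hfree := h.2.subst1 ha.kindFree.1
      rw [hT] at hfree
      exact hfree.elim
  | conv _ _ hB _ _ _ => exact absurd hT hB.ne_kind
  | symb f _ hf _ => exact absurd hT hf.ne_kind

/-- No reduct of the term is a kind or `KIND`. -/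
def NeverKind (R : Rules F) (t : Trm F) : Prop := ∀ u, RedStar R t u → ¬ IsKindLike u

theorem Typing.neverKind (hRS : IsRewriteSystem R) (hpres : PresTyping R Θ sΘ)
    {Γ : List (Trm F)} {t T : Trm F} (h : Typing R Θ sΘ Γ t T) (hT : T ≠ .kind) :
    NeverKind R t := by
  rintro u hu (hk | hk)
  · exact hT ((h.redStar hpres hu).type_eq_kind hRS hpres hk)
  · exact (h.redStar hpres hu).ne_kind hk

theorem NeverKind.rename {t : Trm F} (h : NeverKind R t) {ρ τ : ℕ → ℕ}
    (hτ : ∀ n, τ (ρ n) = n) : NeverKind R (t.rename ρ) := by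
  intro u hu hk
  have hu' := RedStar.rename hu τ
  simp only [Trm.rename_rename, hτ, Trm.rename_id] at hu'
  exact h _ hu' (hk.imp (Trm.isKind_rename _ _).2 Trm.rename_eq_kind.2)

/-- The domains of the leading products of the term never reduce to kinds. -/
def DomsNeverKind (R : Rules F) : Trm F → Prop
  | .pi A B => NeverKind R A ∧ DomsNeverKind R B
  | _ => True

theorem DomsNeverKind.rename {t : Trm F} (h : DomsNeverKind R t) {ρ τ : ℕ → ℕ}
    (hτ : ∀ n, τ (ρ n) = n) : DomsNeverKind R (t.rename ρ) := by
  induction t generalizing ρ τ with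
  | pi A B _ ihB =>
    refine ⟨h.1.rename hτ, ihB (τ := Trm.upRen τ) h.2 fun n => ?_⟩
    cases n with
    | zero => rfl
    | succ n => exact congrArg Nat.succ (hτ n)
  | _ => trivial

theorem Typing.domsNeverKind (hRS : IsRewriteSystem R) (hpres : PresTyping R Θ sΘ)
    {Γ : List (Trm F)} {t T : Trm F} (h : Typing R Θ sΘ Γ t T) : DomsNeverKind R t := by
  induction h with
  | weak _ _ _ _ ih => exact ih.rename Nat.pred_succ
  | prod _ hA _ _ ihB => exact ⟨hA.neverKind hRS hpres (by simp), ihB⟩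
  | conv _ _ _ _ iha _ => exact iha
  | _ => trivial

end Kinds

/-! # Invariance of the interpretation -/

section Interpretation

variable {F : Type} {R : Rules F} {I : Interp F}

open Classical in
/-- The value of `interpF R I` at a term whose product normal forms are the `pi A B`
with `P A B`. -/
noncomputable def interpVal (R : Rules F) (I : Interp F) (P : Trm F → Trm F → Prop) :
    Set (Trm F) :=
  if h : ∃ A B, P A B then piPart I h.choose h.choose_spec.choose else SNset R

theorem domD_red {T T' : Trm F} (h : T ∈ domD R I) (hred : Red R T T') : T' ∈ domD R I :=
  ⟨h.1.inv hred, fun A B hAB => h.2 A B (.head hred hAB)⟩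

theorem interpF_red (hconf : LocallyConfluent R) {T T' : Trm F} (h : T ∈ domD R I)
    (hred : Red R T T') : interpF R I T = interpF R I T' := by
  have hP : (fun A B => RedStar R T (.pi A B) ∧ NormalForm R (.pi A B)) =
      fun A B => RedStar R T' (.pi A B) ∧ NormalForm R (.pi A B) := by
    funext A B
    refine propext ⟨fun ⟨hs, hn⟩ => ⟨?_, hn⟩, fun ⟨hs, hn⟩ => ⟨.head hred hs, hn⟩⟩
    obtain ⟨n, hT'n, hnn⟩ := SN.exists_normalForm (domD_red h hred).1
    rwa [SN.normalForm_unique hconf h.1 hs hn (.head hred hT'n) hnn]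
  refine Part.ext' (iff_of_true h (domD_red h hred)) fun _ _ => ?_
  exact congrArg (interpVal R I) hP

theorem mem_domD_of_dom (hfix : interpF R I = I) {T : Trm F} (h : (I T).Dom) : T ∈ domD R I := by
  rw [← hfix] at h
  exact h

theorem interp_of_not_isKindLike {T : Trm F} {σ : ℕ → Trm F} (hT : ¬ IsKindLike T)
    (h : T.subst σ ∈ domD R I) : interp R I T σ = partMem I (T.subst σ) := by
  cases T with
  | type => exact absurd (.inl trivial) hT
  | kind => exact absurd (.inr rfl) hT
  | pi A B =>
    have hB : ¬ B.IsKind := fun hB => hT (.inl hB)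
    rw [interp, if_neg hB, if_pos h]
  | _ => rw [interp, if_pos h]

theorem interp_red_of_not_isKindLike (hconf : LocallyConfluent R) (hfix : interpF R I = I)
    {T T' : Trm F} {σ : ℕ → Trm F} (hT : ¬ IsKindLike T) (hT' : ¬ IsKindLike T')
    (h : T.subst σ ∈ domD R I) (hred : Red R T T') : interp R I T σ = interp R I T' σ := by
  have hI := interpF_red hconf h (hred.subst σ)
  rw [hfix] at hI
  rw [interp_of_not_isKindLike hT h, interp_of_not_isKindLike hT' (domD_red h (hred.subst σ)),
    partMem, partMem, hI]

theorem interp_red_of_isKind (hRS : IsRewriteSystem R) (hconf : LocallyConfluent R)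
    (hfix : interpF R I = I) {T T' : Trm F} {σ : ℕ → Trm F} (hT : T.IsKind)
    (hdoms : DomsNeverKind R T) (h : T.subst σ ∈ domD R I) (hred : Red R T T') :
    interp R I T σ = interp R I T' σ := by
  induction T generalizing T' σ with
  | type => exact absurd hred (not_red_type hRS _)
  | pi A B _ ihB =>
    have hBk : B.IsKind := hT
    obtain ⟨hA, hcod⟩ := h.2 _ _ .refl
    have hAD := mem_domD_of_dom hfix hA
    rcases red_pi_cases hRS hred with ⟨A', hAA', rfl⟩ | ⟨B', hBB', rfl⟩
    · rw [interp, interp, if_pos hBk, if_pos hBk,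
        interp_red_of_not_isKindLike hconf hfix (hdoms.1 _ .refl) (hdoms.1 _ (.single hAA'))
          hAD hAA']
    · rw [interp, interp, if_pos hBk, if_pos (hBk.red hRS hBB')]
      ext t
      refine forall₂_congr fun a ha => ?_
      rw [interp_of_not_isKindLike (hdoms.1 _ .refl) hAD] at ha
      have hBD := mem_domD_of_dom hfix (hcod _ (Part.get_mem hA) a (ha _ (Part.get_mem hA)))
      rw [Trm.subst1_subst_up] at hBD
      rw [ihB hBk hdoms.2 hBD hBB']
  | _ => exact hT.elim

end Interpretation

/-- Lemma 4(b) of the paper. If `T` is typable, `Tσ ∈ 𝒟` and `T → T'`,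
then `⟦T⟧σ = ⟦T'⟧σ`. -/
theorem interp_invariant_red {F : Type} (R : Rules F) (Θ sΘ : F → Trm F)
    (hRS : IsRewriteSystem R)
    (hconf : LocallyConfluent R)
    (hpres : PresTyping R Θ sΘ)
    (calI : Interp F) (hlfp : IsLfpInterp (interpF R) calI)
    (T T' : Trm F) (σ : ℕ → Trm F)
    (htyp : ∃ (Γ : List (Trm F)) (U : Trm F), Typing R Θ sΘ Γ T U)
    (hdom : Trm.subst σ T ∈ domD R calI)
    (hred : Red R T T') :
    interp R calI T σ = interp R calI T' σ := by
  obtain ⟨Γ, U, hT⟩ := htyp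
  by_cases hk : T.IsKind
  · exact interp_red_of_isKind hRS hconf hlfp.1 hk (hT.domsNeverKind hRS hpres) hdom hred
  · have hU : U ≠ .kind := fun hU => hk (hT.isKind hU)
    have hnk := hT.neverKind hRS hpres hU
    exact interp_red_of_not_isKindLike hconf hlfp.1 (hnk _ .refl) (hnk _ (.single hred)) hdom hred
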